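/- For any prime power q ≥ 5, the real chords of the twisted cubic C form a single orbit of lines under G_q, and the stabilizer in G_q of any real chord has order 2(q−1). Moreover, the stabilizer in G_q of the real chord ℓ through P(0) = (0:0:0:1) and P(∞) = (1:0:0:0) consists exactly of the projectivities induced by the diagonal matrices diag(1, d, d², d³) with d ∈ F_q^*, together with the antidiagonal matrices with rows (0,0,0,1), (0,0,b,0), (0,b²,0,0), (b³,0,0,0) with b ∈ F_q^*. -/

import Mathlib

open Matrix Submodule

noncomputable section

/-- Row-vector action of an invertible matrix on subspaces of `F^4`:
a projectivity of `PG(3,q)` induced by the matrix. -/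
def projAct (F : Type) [Field F] (A : GL (Fin 4) F) :
    Submodule F (Fin 4 → F) → Submodule F (Fin 4 → F) :=
  fun W => W.map (Matrix.vecMulLinear (A : Matrix (Fin 4) (Fin 4) F))

/-- Representative vectors of the points of the twisted cubic. -/
def cubicVecs (F : Type) [Field F] : Set (Fin 4 → F) :=
  {v | (∃ t : F, v = ![t ^ 3, t ^ 2, t, 1]) ∨ v = ![1, 0, 0, 0]}

/-- The twisted cubic, as a set of projective points (1-dimensional subspaces). -/
def twistedCubic (F : Type) [Field F] : Set (Submodule F (Fin 4 → F)) :=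
  (fun v => Submodule.span F {v}) '' cubicVecs F

/-- The group `G_q` of projectivities fixing the twisted cubic, modeled as those maps
on subspaces that are induced by an invertible matrix and map the cubic onto itself. -/
def Gq (F : Type) [Field F] :
    Set ((Submodule F (Fin 4 → F)) → (Submodule F (Fin 4 → F))) :=
  {f | (∃ A : GL (Fin 4) F, f = projAct F A) ∧ f '' twistedCubic F = twistedCubic F}

def isPoint (F : Type) [Field F] (W : Submodule F (Fin 4 → F)) : Prop :=
  Module.finrank F W = 1

def isLine (F : Type) [Field F] (W : Submodule F (Fin 4 → F)) : Prop :=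
  Module.finrank F W = 2

/-- The orbit of a line under `G_q`. -/
def lineOrbit (F : Type) [Field F] (ℓ : Submodule F (Fin 4 → F)) :
    Set (Submodule F (Fin 4 → F)) :=
  {m | ∃ f ∈ Gq F, f ℓ = m}

/-- The stabilizer of a line in `G_q`. -/
def lineStab (F : Type) [Field F] (ℓ : Submodule F (Fin 4 → F)) :
    Set ((Submodule F (Fin 4 → F)) → (Submodule F (Fin 4 → F))) :=
  {f ∈ Gq F | f ℓ = ℓ}

/-- The linear form `y ↦ c0 y0 + c1 y1 + c2 y2 + c3 y3` defining a plane. -/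
def planeForm (F : Type) [Field F] (c : Fin 4 → F) : (Fin 4 → F) →ₗ[F] F where
  toFun y := c 0 * y 0 + c 1 * y 1 + c 2 * y 2 + c 3 * y 3
  map_add' a b := by simp only [Pi.add_apply]; ring
  map_smul' r a := by simp only [Pi.smul_apply, smul_eq_mul, RingHom.id_apply]; ring

/-- The plane `π(c0,c1,c2,c3)`. -/
def planeOf (F : Type) [Field F] (c : Fin 4 → F) : Submodule F (Fin 4 → F) :=
  LinearMap.ker (planeForm F c)

/-- The null polarity `𝔄`: the polar subspace of `W` w.r.t. the bilinear form
sending a point `(x0:x1:x2:x3)` to the plane `π(x3, −3x2, 3x1, −x0)`. -/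
def nullPolarity (F : Type) [Field F] (W : Submodule F (Fin 4 → F)) :
    Submodule F (Fin 4 → F) :=
  ⨅ x ∈ (W : Set (Fin 4 → F)), planeOf F ![x 3, -(3 * x 2), 3 * x 1, -(x 0)]

/-- The tangent line to the twisted cubic at `P(t)`, `t ∈ F`. -/
def tangentAt (F : Type) [Field F] (t : F) : Submodule F (Fin 4 → F) :=
  Submodule.span F {![t ^ 3, t ^ 2, t, 1], ![3 * t ^ 2, 2 * t, 1, 0]}

/-- The tangent line to the twisted cubic at `P(∞)`. -/
def tangentAtInf (F : Type) [Field F] : Submodule F (Fin 4 → F) :=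
  Submodule.span F {![1, 0, 0, 0], ![0, 1, 0, 0]}

def isTangent (F : Type) [Field F] (ℓ : Submodule F (Fin 4 → F)) : Prop :=
  (∃ t : F, ℓ = tangentAt F t) ∨ ℓ = tangentAtInf F

/-- The osculating plane at `P(t)`, `t ∈ F`. -/
def oscPlane (F : Type) [Field F] (t : F) : Submodule F (Fin 4 → F) :=
  planeOf F ![1, -(3 * t), 3 * t ^ 2, -(t ^ 3)]

/-- The osculating plane at `P(∞)`. -/
def oscPlaneInf (F : Type) [Field F] : Submodule F (Fin 4 → F) :=
  planeOf F ![0, 0, 0, 1]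

def isOscPlane (F : Type) [Field F] (π : Submodule F (Fin 4 → F)) : Prop :=
  (∃ t : F, π = oscPlane F t) ∨ π = oscPlaneInf F

/-- A real chord: the line joining two distinct points of the twisted cubic. -/
def isRealChord (F : Type) [Field F] (ℓ : Submodule F (Fin 4 → F)) : Prop :=
  ∃ u ∈ cubicVecs F, ∃ v ∈ cubicVecs F,
    Submodule.span F {u} ≠ Submodule.span F {v} ∧ ℓ = Submodule.span F {u, v}

/-- A real axis: the intersection of two distinct osculating planes. -/
def isRealAxis (F : Type) [Field F] (ℓ : Submodule F (Fin 4 → F)) : Prop :=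
  ∃ π₁ π₂ : Submodule F (Fin 4 → F),
    isOscPlane F π₁ ∧ isOscPlane F π₂ ∧ π₁ ≠ π₂ ∧ ℓ = π₁ ⊓ π₂

/-- The `F_{q²}`-extension of a subspace of `F^4`. -/
def extendSub (F K : Type) [Field F] [Field K] [Algebra F K]
    (W : Submodule F (Fin 4 → F)) : Submodule K (Fin 4 → K) :=
  Submodule.span K ((fun v i => algebraMap F K (v i)) '' (W : Set (Fin 4 → F)))

/-- An external line: a line containing no point of the twisted cubic. -/
def isExternal (F : Type) [Field F] (ℓ : Submodule F (Fin 4 → F)) : Prop :=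
  isLine F ℓ ∧ ∀ P ∈ twistedCubic F, ¬ P ≤ ℓ

/-- An imaginary chord: a line disjoint from the cubic whose `F_{q²}`-extension joins a
pair of Frobenius-conjugate points `P(t)`, `P(t^q)` of the cubic over `F_{q²}`. -/
def isImagChord (F K : Type) [Field F] [Field K] [Algebra F K] (q : ℕ)
    (ℓ : Submodule F (Fin 4 → F)) : Prop :=
  isExternal F ℓ ∧
  ∃ t : K, t ∉ Set.range (algebraMap F K) ∧
    extendSub F K ℓ =
      Submodule.span K
        ({![t ^ 3, t ^ 2, t, 1], ![(t ^ q) ^ 3, (t ^ q) ^ 2, t ^ q, 1]} :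
          Set (Fin 4 → K))

/-- An imaginary axis: a line whose `F_{q²}`-extension is the intersection of a pair of
Frobenius-conjugate osculating planes `π_osc(t)`, `π_osc(t^q)` over `F_{q²}`. -/
def isImagAxis (F K : Type) [Field F] [Field K] [Algebra F K] (q : ℕ)
    (ℓ : Submodule F (Fin 4 → F)) : Prop :=
  isLine F ℓ ∧
  ∃ t : K, t ∉ Set.range (algebraMap F K) ∧
    extendSub F K ℓ =
      planeOf K ![1, -(3 * t), 3 * t ^ 2, -(t ^ 3)] ⊓
        planeOf K ![1, -(3 * t ^ q), 3 * (t ^ q) ^ 2, -((t ^ q) ^ 3)]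

/-- A unisecant: a line meeting the twisted cubic in exactly one point. -/
def isUnisecant (F : Type) [Field F] (ℓ : Submodule F (Fin 4 → F)) : Prop :=
  isLine F ℓ ∧ ∃! P, P ∈ twistedCubic F ∧ P ≤ ℓ

/-- A `UΓ`-line: a non-tangent unisecant lying in some osculating plane. -/
def isUGamma (F : Type) [Field F] (ℓ : Submodule F (Fin 4 → F)) : Prop :=
  isUnisecant F ℓ ∧ ¬ isTangent F ℓ ∧ ∃ π, isOscPlane F π ∧ ℓ ≤ π

/-- A `UnΓ`-line: a non-tangent unisecant lying in no osculating plane. -/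
def isUnGamma (F : Type) [Field F] (ℓ : Submodule F (Fin 4 → F)) : Prop :=
  isUnisecant F ℓ ∧ ¬ isTangent F ℓ ∧ ∀ π, isOscPlane F π → ¬ ℓ ≤ π

/-- An `EΓ`-line: an external line, other than an imaginary chord, lying in some
osculating plane. -/
def isEGamma (F K : Type) [Field F] [Field K] [Algebra F K] (q : ℕ)
    (ℓ : Submodule F (Fin 4 → F)) : Prop :=
  isExternal F ℓ ∧ ¬ isImagChord F K q ℓ ∧ ∃ π, isOscPlane F π ∧ ℓ ≤ π

/-- For `q ≡ 0 (mod 3)`: the axis of `Γ`, the line `x0 = x3 = 0`. -/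
def axisLine (F : Type) [Field F] : Submodule F (Fin 4 → F) :=
  Submodule.span F {![0, 1, 0, 0], ![0, 0, 1, 0]}

/-- For `q ≡ 0 (mod 3)`: an `EA`-line, i.e. an external line, other than an imaginary
chord and other than the axis of `Γ`, meeting the axis of `Γ`. -/
def isEA (F K : Type) [Field F] [Field K] [Algebra F K] (q : ℕ)
    (ℓ : Submodule F (Fin 4 → F)) : Prop :=
  isExternal F ℓ ∧ ¬ isImagChord F K q ℓ ∧ ℓ ≠ axisLine F ∧ ℓ ⊓ axisLine F ≠ ⊥

end

/-!
Write a point of the projective line as `x = (x₀ : x₁)`. Then `C` is the image of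
`x ↦ (x₀³ : x₀²x₁ : x₀x₁² : x₁³)`, with `P(t)` the image of `(t : 1)` and `P(∞)` that of `(1 : 0)`,
and the action of `GL₂` on the projective line extends to `C` through the symmetric cube
`GL₂ → GL₄`. Since `GL₂` is transitive on pairs of distinct points of the line, the real chords form
one orbit.

The chord through `P(0)` and `P(∞)` meets `C` only there, so its stabilizer fixes or swaps the two
points, and the swap case reduces to the other one by composing with the symmetric cube of a swap.
If a matrix fixes both points, the images of the remaining points of `C` must still satisfy the
quadrics `y₀y₂ = y₁²` and `y₁y₃ = y₂²`. Along `C` these are polynomial identities of degree at most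
three after dividing by a power of the parameter, so with at least four nonzero parameters they hold
coefficientwise, which forces the matrix to be a multiple of `diag(1, d, d², d³)`.
-/

noncomputable section

open scoped Cardinal Polynomial

section SymmetricCube

variable {R : Type*} [CommRing R]

/-- The Veronese map `R² → R⁴` of degree three, a homogeneous parametrization of the twisted
cubic. -/
def veronese (x : Fin 2 → R) : Fin 4 → R :=
  ![x 0 ^ 3, x 0 ^ 2 * x 1, x 0 * x 1 ^ 2, x 1 ^ 3]

lemma veronese_smul (k : R) (x : Fin 2 → R) : veronese (k • x) = k ^ 3 • veronese x := by
  ext i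
  fin_cases i <;> simp [veronese] <;> ring

/-- The symmetric cube of a `2 × 2` matrix, acting on row vectors. Its columns are the coefficients
of the cubic monomials in the two linear forms given by the columns of the matrix. -/
def symCube : Matrix (Fin 2) (Fin 2) R →* Matrix (Fin 4) (Fin 4) R where
  toFun g :=
    !![g 0 0 ^ 3, g 0 0 ^ 2 * g 0 1, g 0 0 * g 0 1 ^ 2, g 0 1 ^ 3;
      3 * g 0 0 ^ 2 * g 1 0, g 0 0 ^ 2 * g 1 1 + 2 * g 0 0 * g 0 1 * g 1 0,
        2 * g 0 0 * g 0 1 * g 1 1 + g 0 1 ^ 2 * g 1 0, 3 * g 0 1 ^ 2 * g 1 1;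
      3 * g 0 0 * g 1 0 ^ 2, 2 * g 0 0 * g 1 0 * g 1 1 + g 0 1 * g 1 0 ^ 2,
        g 0 0 * g 1 1 ^ 2 + 2 * g 0 1 * g 1 0 * g 1 1, 3 * g 0 1 * g 1 1 ^ 2;
      g 1 0 ^ 3, g 1 0 ^ 2 * g 1 1, g 1 0 * g 1 1 ^ 2, g 1 1 ^ 3]
  map_one' := by
    ext i j
    fin_cases i <;> fin_cases j <;> simp
  map_mul' g h := by
    ext i j
    fin_cases i <;> fin_cases j <;>
      simp [Matrix.mul_apply, Fin.sum_univ_four, Fin.sum_univ_two] <;> ring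

lemma veronese_vecMul_symCube (x : Fin 2 → R) (g : Matrix (Fin 2) (Fin 2) R) :
    veronese x ᵥ* symCube g = veronese (x ᵥ* g) := by
  ext i
  fin_cases i <;>
    simp [veronese, symCube, vecMul, dotProduct, Fin.sum_univ_four, Fin.sum_univ_two] <;> ring

/-- The symmetric cube as a homomorphism `GL₂ → GL₄`. -/
def symCubeGL : GL (Fin 2) R →* GL (Fin 4) R := Units.map symCube

end SymmetricCube

section QuadricIdentity

variable {R : Type*} [CommRing R] [IsDomain R]

lemma eq_zero_of_eval_eq_zero_off_zero {p : R[X]} (hcard : ((p.natDegree + 1 : ℕ) : Cardinal) < #R)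
    (hp : ∀ t ≠ 0, p.eval t = 0) : p = 0 := by
  have hX : Polynomial.X * p = 0 := by
    refine Polynomial.eq_zero_of_forall_eval_zero_of_natDegree_lt_card _ (fun t ↦ ?_) ?_
    · rcases eq_or_ne t 0 with rfl | ht
      · simp
      · simp [hp t ht]
    · refine lt_of_le_of_lt (Nat.cast_le.2 ?_) hcard
      exact Polynomial.natDegree_mul_le.trans (by rw [Polynomial.natDegree_X, add_comm])
  exact (mul_eq_zero.1 hX).resolve_left Polynomial.X_ne_zero

lemma cubic_eq_zero_of_eval_eq_zero_off_zero (hR : 5 ≤ #R) {p : Cubic R}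
    (hp : ∀ t ≠ 0, p.toPoly.eval t = 0) : p = 0 := by
  refine (Cubic.toPoly_eq_zero_iff p).1 (eq_zero_of_eval_eq_zero_off_zero ?_ hp)
  have hdeg : p.toPoly.natDegree + 1 < 5 :=
    Nat.lt_of_le_of_lt (Nat.succ_le_succ Polynomial.natDegree_cubic_le) (by norm_num)
  exact lt_of_lt_of_le (by exact_mod_cast hdeg) hR

lemma coeff_eq_of_quadric_identity (hR : 5 ≤ #R) {a b c d e f g : R}
    (h : ∀ t ≠ 0, (a * t ^ 3 + b * t ^ 2 + c * t) * (d * t ^ 2 + e * t) =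
      (f * t ^ 2 + g * t) ^ 2) :
    a * d = 0 ∧ a * e + b * d = f ^ 2 ∧ b * e + c * d = 2 * f * g ∧ c * e = g ^ 2 := by
  have hzero : (⟨a * d, a * e + b * d - f ^ 2, b * e + c * d - 2 * f * g, c * e - g ^ 2⟩ :
      Cubic R) = 0 := by
    refine cubic_eq_zero_of_eval_eq_zero_off_zero hR fun t ht ↦
      mul_left_cancel₀ (pow_ne_zero 2 ht) ?_
    simp only [Cubic.toPoly, Polynomial.eval_add, Polynomial.eval_mul, Polynomial.eval_pow,
      Polynomial.eval_C, Polynomial.eval_X]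
    linear_combination h t ht
  obtain ⟨h₃, h₂, h₁, h₀⟩ := Cubic.ext_iff.1 hzero
  exact ⟨h₃, sub_eq_zero.1 h₂, sub_eq_zero.1 h₁, sub_eq_zero.1 h₀⟩

end QuadricIdentity

variable {F : Type} [Field F]

section Projectivity

variable (A B : GL (Fin 4) F)

lemma projAct_span_singleton (v : Fin 4 → F) :
    projAct F A (span F {v}) = span F {v ᵥ* (A : Matrix (Fin 4) (Fin 4) F)} := by
  rw [projAct, map_span, Set.image_singleton, vecMulLinear_apply]

lemma projAct_sup (V W : Submodule F (Fin 4 → F)) :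
    projAct F A (V ⊔ W) = projAct F A V ⊔ projAct F A W :=
  Submodule.map_sup V W _

lemma projAct_mul : projAct F (A * B) = projAct F B ∘ projAct F A := by
  funext W
  rw [Function.comp_apply, projAct, projAct, projAct, ← Submodule.map_comp]
  congr 1
  exact LinearMap.ext fun v ↦ by simp [vecMul_vecMul]

lemma projAct_one : projAct F (1 : GL (Fin 4) F) = id := by
  funext W
  have hone : vecMulLinear ((1 : GL (Fin 4) F) : Matrix (Fin 4) (Fin 4) F) = LinearMap.id :=
    LinearMap.ext fun v ↦ by simp
  rw [projAct, hone, Submodule.map_id, id]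

lemma projAct_inv_comp : projAct F A⁻¹ ∘ projAct F A = id := by
  rw [← projAct_mul, mul_inv_cancel, projAct_one]

lemma projAct_comp_inv : projAct F A ∘ projAct F A⁻¹ = id := by
  rw [← projAct_mul, inv_mul_cancel, projAct_one]

variable {A B} in
lemma projAct_eq_of_eq_smul {k : F} (hk : k ≠ 0)
    (h : (A : Matrix (Fin 4) (Fin 4) F) = k • (B : Matrix (Fin 4) (Fin 4) F)) :
    projAct F A = projAct F B := by
  funext W
  have hlin : vecMulLinear (A : Matrix (Fin 4) (Fin 4) F) =
      k • vecMulLinear (B : Matrix (Fin 4) (Fin 4) F) :=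
    LinearMap.ext fun v ↦ by simp [h]
  rw [projAct, projAct, hlin, Submodule.map_smul _ _ _ hk]

end Projectivity

section TwistedCubicGroup

variable {f g : Submodule F (Fin 4 → F) → Submodule F (Fin 4 → F)}
  {ℓ m P Q : Submodule F (Fin 4 → F)}

lemma comp_mem_Gq (hf : f ∈ Gq F) (hg : g ∈ Gq F) : f ∘ g ∈ Gq F := by
  obtain ⟨⟨A, rfl⟩, hA⟩ := hf
  obtain ⟨⟨B, rfl⟩, hB⟩ := hg
  exact ⟨⟨B * A, (projAct_mul B A).symm⟩, by rw [Set.image_comp, hB, hA]⟩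

lemma exists_inverse_mem_Gq (hf : f ∈ Gq F) : ∃ g ∈ Gq F, g ∘ f = id ∧ f ∘ g = id := by
  obtain ⟨⟨A, rfl⟩, hA⟩ := hf
  refine ⟨projAct F A⁻¹, ⟨⟨A⁻¹, rfl⟩, ?_⟩, projAct_inv_comp A, projAct_comp_inv A⟩
  conv_lhs => rw [← hA]
  rw [← Set.image_comp, projAct_inv_comp, Set.image_id]

lemma injective_of_mem_Gq (hf : f ∈ Gq F) : Function.Injective f := by
  obtain ⟨g, -, hgf, -⟩ := exists_inverse_mem_Gq hf
  exact Function.LeftInverse.injective (congrFun hgf)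

lemma map_sup_of_mem_Gq (hf : f ∈ Gq F) : f (P ⊔ Q) = f P ⊔ f Q := by
  obtain ⟨⟨A, rfl⟩, -⟩ := hf
  exact projAct_sup A P Q

lemma apply_mem_twistedCubic (hf : f ∈ Gq F) (hP : P ∈ twistedCubic F) : f P ∈ twistedCubic F :=
  hf.2 ▸ Set.mem_image_of_mem f hP

lemma mem_lineOrbit_symm (h : m ∈ lineOrbit F ℓ) : ℓ ∈ lineOrbit F m := by
  obtain ⟨f, hf, rfl⟩ := h
  obtain ⟨g, hg, hgf, -⟩ := exists_inverse_mem_Gq hf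
  exact ⟨g, hg, congrFun hgf ℓ⟩

lemma mk_lineStab_le_of_mem_lineOrbit (h : m ∈ lineOrbit F ℓ) :
    #(lineStab F ℓ) ≤ #(lineStab F m) := by
  obtain ⟨f, hf, rfl⟩ := h
  obtain ⟨g, hg, hgf, -⟩ := exists_inverse_mem_Gq hf
  have hconj (s : lineStab F ℓ) : f ∘ s ∘ g ∈ lineStab F (f ℓ) := by
    refine ⟨comp_mem_Gq hf (comp_mem_Gq s.2.1 hg), ?_⟩
    have hgl : g (f ℓ) = ℓ := congrFun hgf ℓ
    simp only [Function.comp_apply, hgl, s.2.2]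
  refine Cardinal.mk_le_of_injective (f := fun s ↦ ⟨f ∘ s ∘ g, hconj s⟩) fun s t hst ↦ ?_
  have hst' : f ∘ s ∘ g = f ∘ t ∘ g := congrArg Subtype.val hst
  have hsurj : Function.Surjective g := Function.RightInverse.surjective (congrFun hgf)
  exact Subtype.ext (hsurj.injective_comp_right ((injective_of_mem_Gq hf).comp_left hst'))

lemma mk_lineStab_eq_of_mem_lineOrbit (h : m ∈ lineOrbit F ℓ) :
    #(lineStab F m) = #(lineStab F ℓ) :=
  (mk_lineStab_le_of_mem_lineOrbit (mem_lineOrbit_symm h)).antisymm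
    (mk_lineStab_le_of_mem_lineOrbit h)

lemma isRealChord_iff :
    isRealChord F ℓ ↔ ∃ P ∈ twistedCubic F, ∃ Q ∈ twistedCubic F, P ≠ Q ∧ ℓ = P ⊔ Q := by
  simp only [isRealChord, twistedCubic, Set.exists_mem_image, span_insert]

lemma isRealChord_apply (hf : f ∈ Gq F) (hℓ : isRealChord F ℓ) : isRealChord F (f ℓ) := by
  obtain ⟨P, hP, Q, hQ, hPQ, rfl⟩ := isRealChord_iff.1 hℓ
  exact isRealChord_iff.2 ⟨f P, apply_mem_twistedCubic hf hP, f Q, apply_mem_twistedCubic hf hQ,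
    (injective_of_mem_Gq hf).ne hPQ, map_sup_of_mem_Gq hf⟩

end TwistedCubicGroup

section CubicPoint

variable {x y : Fin 2 → F} {P Q : Submodule F (Fin 4 → F)}

/-- The point of the twisted cubic with homogeneous parameter `x`; thus `P(t)` is
`cubicPoint ![t, 1]` and `P(∞)` is `cubicPoint ![1, 0]`. At `x = 0` it degenerates to `⊥`. -/
def cubicPoint (x : Fin 2 → F) : Submodule F (Fin 4 → F) := span F {veronese x}

lemma cubicPoint_smul {k : F} (hk : k ≠ 0) (x : Fin 2 → F) :
    cubicPoint (k • x) = cubicPoint x := by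
  rw [cubicPoint, veronese_smul, span_singleton_smul_eq (pow_ne_zero 3 hk).isUnit, cubicPoint]

lemma cubicPoint_eq_infty (hx₀ : x 0 ≠ 0) (hx₁ : x 1 = 0) : cubicPoint x = cubicPoint ![1, 0] := by
  rw [← cubicPoint_smul hx₀ ![1, 0]]
  congr 1
  ext i
  fin_cases i <;> simp [hx₁]

lemma cubicPoint_eq_affine (hx₁ : x 1 ≠ 0) : cubicPoint x = cubicPoint ![x 0 / x 1, 1] := by
  rw [← cubicPoint_smul hx₁ ![x 0 / x 1, 1]]
  congr 1
  ext i
  fin_cases i <;> simp [mul_div_cancel₀ _ hx₁]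

lemma span_eq_cubicPoint_affine (t : F) : span F {![t ^ 3, t ^ 2, t, 1]} = cubicPoint ![t, 1] := by
  simp [cubicPoint, veronese]

lemma span_eq_cubicPoint_infty : span F {![1, 0, 0, 0]} = cubicPoint (![1, 0] : Fin 2 → F) := by
  simp [cubicPoint, veronese]

lemma mem_twistedCubic_iff : P ∈ twistedCubic F ↔ ∃ x ≠ 0, P = cubicPoint x := by
  constructor
  · rintro ⟨_, ⟨t, rfl⟩ | rfl, rfl⟩
    · exact ⟨![t, 1], by simp, span_eq_cubicPoint_affine t⟩
    · exact ⟨![1, 0], by simp, span_eq_cubicPoint_infty⟩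
  · rintro ⟨x, hx, rfl⟩
    by_cases hx₁ : x 1 = 0
    · have hx₀ : x 0 ≠ 0 := fun hx₀ ↦ hx (by ext i; fin_cases i <;> assumption)
      rw [cubicPoint_eq_infty hx₀ hx₁, ← span_eq_cubicPoint_infty]
      exact ⟨_, Or.inr rfl, rfl⟩
    · rw [cubicPoint_eq_affine hx₁, ← span_eq_cubicPoint_affine]
      exact ⟨_, Or.inl ⟨_, rfl⟩, rfl⟩

lemma cross_eq_of_cubicPoint_eq (h : cubicPoint x = cubicPoint y) : x 0 * y 1 = x 1 * y 0 := by
  obtain ⟨z, hz⟩ := span_singleton_eq_span_singleton.1 h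
  have h₀ : z * x 0 ^ 3 = y 0 ^ 3 := congrFun hz 0
  have h₁ : z * (x 0 ^ 2 * x 1) = y 0 ^ 2 * y 1 := congrFun hz 1
  rcases eq_or_ne (x 0) 0 with hx | hx
  · have hy : y 0 = 0 := pow_eq_zero_iff three_ne_zero |>.1 (by rw [← h₀, hx]; ring)
    rw [hx, hy, zero_mul, mul_zero]
  · refine mul_left_cancel₀ (mul_ne_zero z.ne_zero (pow_ne_zero 2 hx)) ?_
    linear_combination y 1 * h₀ - y 0 * h₁

lemma linearIndependent_of_cubicPoint_ne (hx : x ≠ 0) (hy : y ≠ 0)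
    (h : cubicPoint x ≠ cubicPoint y) : LinearIndependent F ![x, y] := by
  refine (LinearIndependent.pair_iff' hx).2 fun k hk ↦ h ?_
  have hk₀ : k ≠ 0 := by
    rintro rfl
    exact hy (hk ▸ zero_smul F x)
  rw [← hk, cubicPoint_smul hk₀]

lemma projAct_symCubeGL_cubicPoint (g : GL (Fin 2) F) (x : Fin 2 → F) :
    projAct F (symCubeGL g) (cubicPoint x) =
      cubicPoint (x ᵥ* (g : Matrix (Fin 2) (Fin 2) F)) := by
  rw [cubicPoint, projAct_span_singleton, cubicPoint, ← veronese_vecMul_symCube]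
  rfl

lemma projAct_symCubeGL_mem_Gq (g : GL (Fin 2) F) : projAct F (symCubeGL g) ∈ Gq F := by
  have hmaps (h : GL (Fin 2) F) :
      Set.MapsTo (projAct F (symCubeGL h)) (twistedCubic F) (twistedCubic F) := by
    intro P hP
    obtain ⟨x, hx, rfl⟩ := mem_twistedCubic_iff.1 hP
    refine mem_twistedCubic_iff.2 ⟨_, fun h₀ ↦ hx ?_, projAct_symCubeGL_cubicPoint h x⟩
    exact vecMul_injective_of_isUnit h.isUnit (h₀.trans (zero_vecMul _).symm)
  refine ⟨⟨_, rfl⟩, (hmaps g).image_subset.antisymm fun P hP ↦ ⟨_, hmaps g⁻¹ hP, ?_⟩⟩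
  rw [map_inv]
  exact congrFun (projAct_comp_inv (symCubeGL g)) P

lemma quadrics_of_mem_cubicPoint {v : Fin 4 → F} (hv : v ∈ cubicPoint x) :
    v 0 * v 2 = v 1 ^ 2 ∧ v 1 * v 3 = v 2 ^ 2 := by
  obtain ⟨k, rfl⟩ := mem_span_singleton.1 hv
  constructor <;> simp [veronese] <;> ring

lemma quadrics_veronese_vecMul {A : GL (Fin 4) F} (hA : projAct F A ∈ Gq F) (hx : x ≠ 0)
    {v : Fin 4 → F} (hv : v = veronese x ᵥ* (A : Matrix (Fin 4) (Fin 4) F)) :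
    v 0 * v 2 = v 1 ^ 2 ∧ v 1 * v 3 = v 2 ^ 2 := by
  obtain ⟨y, -, hy⟩ := mem_twistedCubic_iff.1
    (apply_mem_twistedCubic hA (mem_twistedCubic_iff.2 ⟨x, hx, rfl⟩))
  refine quadrics_of_mem_cubicPoint (x := y) ?_
  rw [← hy, cubicPoint, projAct_span_singleton, hv]
  exact mem_span_singleton_self _

end CubicPoint

section DiagonalAndAntidiagonal

/-- The matrix `diag(1, d)`, acting on the parameter of the twisted cubic by `t ↦ t / d`. -/
def dilation (d : Fˣ) : GL (Fin 2) F :=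
  GeneralLinearGroup.mkOfDetNeZero !![1, 0; 0, (d : F)] (by simp)

/-- The antidiagonal matrix with entries `1` and `b`, acting on the parameter of the twisted cubic
by `t ↦ b / t`. -/
def inversion (b : Fˣ) : GL (Fin 2) F :=
  GeneralLinearGroup.mkOfDetNeZero !![0, 1; (b : F), 0] (by simp)

lemma coe_symCubeGL_dilation (d : Fˣ) :
    (symCubeGL (dilation d) : Matrix (Fin 4) (Fin 4) F) =
      !![1, 0, 0, 0; 0, (d : F), 0, 0; 0, 0, (d : F) ^ 2, 0; 0, 0, 0, (d : F) ^ 3] := by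
  ext i j
  fin_cases i <;> fin_cases j <;>
    simp [symCubeGL, symCube, dilation, GeneralLinearGroup.mkOfDetNeZero]

lemma coe_symCubeGL_inversion (b : Fˣ) :
    (symCubeGL (inversion b) : Matrix (Fin 4) (Fin 4) F) =
      !![0, 0, 0, 1; 0, 0, (b : F), 0; 0, (b : F) ^ 2, 0, 0; (b : F) ^ 3, 0, 0, 0] := by
  ext i j
  fin_cases i <;> fin_cases j <;>
    simp [symCubeGL, symCube, inversion, GeneralLinearGroup.mkOfDetNeZero]

lemma projAct_dilation_cubicPoint (d : Fˣ) (x : Fin 2 → F) :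
    projAct F (symCubeGL (dilation d)) (cubicPoint x) = cubicPoint ![x 0, d * x 1] := by
  rw [projAct_symCubeGL_cubicPoint]
  congr 1
  ext i
  fin_cases i <;>
    simp [dilation, GeneralLinearGroup.mkOfDetNeZero, vecMul, dotProduct, mul_comm]

lemma projAct_inversion_cubicPoint (b : Fˣ) (x : Fin 2 → F) :
    projAct F (symCubeGL (inversion b)) (cubicPoint x) = cubicPoint ![b * x 1, x 0] := by
  rw [projAct_symCubeGL_cubicPoint]
  congr 1
  ext i
  fin_cases i <;>
    simp [inversion, GeneralLinearGroup.mkOfDetNeZero, vecMul, dotProduct, mul_comm]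

lemma inversion_one_mul_inversion_one : inversion (1 : Fˣ) * inversion 1 = 1 := by
  ext i j
  fin_cases i <;> fin_cases j <;> simp [inversion, GeneralLinearGroup.mkOfDetNeZero]

lemma dilation_mul_inversion_one (d : Fˣ) : dilation d * inversion 1 = inversion d := by
  ext i j
  fin_cases i <;> fin_cases j <;>
    simp [dilation, inversion, GeneralLinearGroup.mkOfDetNeZero]

end DiagonalAndAntidiagonal

section FixingTwoPoints

variable {A : GL (Fin 4) F} {f : Submodule F (Fin 4 → F) → Submodule F (Fin 4 → F)}

lemma exists_row_eq_of_fixes_infty (h : projAct F A (cubicPoint ![1, 0]) = cubicPoint ![1, 0]) :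
    ∃ a : F, a ≠ 0 ∧ A 0 = ![a, 0, 0, 0] := by
  rw [← span_eq_cubicPoint_infty, projAct_span_singleton, eq_comm] at h
  obtain ⟨a, ha⟩ := span_singleton_eq_span_singleton.1 h
  refine ⟨a, a.ne_zero, ?_⟩
  calc A 0 = ![1, 0, 0, 0] ᵥ* (A : Matrix (Fin 4) (Fin 4) F) := by
        ext j; simp [vecMul, dotProduct, Fin.sum_univ_four]
    _ = a • ![1, 0, 0, 0] := ha.symm
    _ = ![(a : F), 0, 0, 0] := by simp [Units.smul_def]

lemma exists_row_eq_of_fixes_zero (h : projAct F A (cubicPoint ![0, 1]) = cubicPoint ![0, 1]) :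
    ∃ c : F, c ≠ 0 ∧ A 3 = ![0, 0, 0, c] := by
  rw [← span_eq_cubicPoint_affine, projAct_span_singleton, eq_comm] at h
  obtain ⟨c, hc⟩ := span_singleton_eq_span_singleton.1 h
  refine ⟨c, c.ne_zero, ?_⟩
  calc A 3 = ![0 ^ 3, 0 ^ 2, 0, 1] ᵥ* (A : Matrix (Fin 4) (Fin 4) F) := by
        ext j; simp [vecMul, dotProduct, Fin.sum_univ_four]
    _ = c • ![0 ^ 3, 0 ^ 2, 0, 1] := hc.symm
    _ = ![0, 0, 0, (c : F)] := by simp [Units.smul_def]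

lemma entries_of_first_quadric {a c : F} (hF : 5 ≤ #F) (hA : projAct F A ∈ Gq F)
    (h₀ : A 0 = ![a, 0, 0, 0]) (h₃ : A 3 = ![0, 0, 0, c]) :
    a * A 1 2 = 0 ∧ a * A 2 2 + A 1 0 * A 1 2 = A 1 1 ^ 2 ∧
      A 1 0 * A 2 2 + A 2 0 * A 1 2 = 2 * A 1 1 * A 2 1 ∧ A 2 0 * A 2 2 = A 2 1 ^ 2 := by
  refine coeff_eq_of_quadric_identity hF fun t _ ↦ ?_
  have h : (t ^ 3 * a + t ^ 2 * A 1 0 + t * A 2 0) * (t ^ 2 * A 1 2 + t * A 2 2) =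
      (t ^ 2 * A 1 1 + t * A 2 1) ^ 2 := by
    simpa [veronese, vecMul, dotProduct, Fin.sum_univ_four, h₀, h₃] using
      (quadrics_veronese_vecMul hA (x := ![t, 1]) (by simp) rfl).1
  linear_combination h

lemma entries_of_second_quadric {a c : F} (hF : 5 ≤ #F) (hA : projAct F A ∈ Gq F)
    (h₀ : A 0 = ![a, 0, 0, 0]) (h₃ : A 3 = ![0, 0, 0, c]) :
    c * A 2 1 = 0 ∧ c * A 1 1 + A 2 3 * A 2 1 = A 2 2 ^ 2 ∧
      A 2 3 * A 1 1 + A 1 3 * A 2 1 = 2 * A 2 2 * A 1 2 ∧ A 1 3 * A 1 1 = A 1 2 ^ 2 := by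
  refine coeff_eq_of_quadric_identity hF fun t _ ↦ ?_
  have h : (t * A 1 1 + t ^ 2 * A 2 1) * (t * A 1 3 + t ^ 2 * A 2 3 + t ^ 3 * c) =
      (t * A 1 2 + t ^ 2 * A 2 2) ^ 2 := by
    simpa [veronese, vecMul, dotProduct, Fin.sum_univ_four, h₀, h₃] using
      (quadrics_veronese_vecMul hA (x := ![1, t]) (by simp) rfl).2
  linear_combination h

lemma entry_one_one_ne_zero (h₀₁ : A 0 1 = 0) (h₂₁ : A 2 1 = 0) (h₃₁ : A 3 1 = 0) :
    A 1 1 ≠ 0 := by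
  intro h₁₁
  refine A.det_ne_zero (det_eq_zero_of_column_eq_zero 1 fun i ↦ ?_)
  fin_cases i <;> assumption

lemma exists_eq_smul_symCubeGL_dilation {a c : F} (hF : 5 ≤ #F) (hA : projAct F A ∈ Gq F)
    (ha : a ≠ 0) (hc : c ≠ 0) (h₀ : A 0 = ![a, 0, 0, 0]) (h₃ : A 3 = ![0, 0, 0, c]) :
    ∃ d : Fˣ, (A : Matrix (Fin 4) (Fin 4) F) =
      a • (symCubeGL (dilation d) : Matrix (Fin 4) (Fin 4) F) := by
  obtain ⟨h₁₂, hsq₁, h₁₀, h₂₀⟩ := entries_of_first_quadric hF hA h₀ h₃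
  obtain ⟨h₂₁, hsq₂, h₂₃, h₁₃⟩ := entries_of_second_quadric hF hA h₀ h₃
  replace h₁₂ : A 1 2 = 0 := (mul_eq_zero.1 h₁₂).resolve_left ha
  replace h₂₁ : A 2 1 = 0 := (mul_eq_zero.1 h₂₁).resolve_left hc
  rw [h₁₂, mul_zero, add_zero] at hsq₁
  rw [h₂₁, mul_zero, add_zero] at hsq₂
  have h₁₁ : A 1 1 ≠ 0 := entry_one_one_ne_zero (by simp [h₀]) h₂₁ (by simp [h₃])
  have h₂₂ : A 2 2 ≠ 0 := right_ne_zero_of_mul (hsq₁ ▸ pow_ne_zero 2 h₁₁)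
  replace h₁₀ : A 1 0 = 0 := by simpa [h₁₂, h₂₁, h₂₂] using h₁₀
  replace h₂₀ : A 2 0 = 0 := by simpa [h₂₁, h₂₂] using h₂₀
  replace h₁₃ : A 1 3 = 0 := by simpa [h₁₂, h₁₁] using h₁₃
  replace h₂₃ : A 2 3 = 0 := by simpa [h₁₂, h₂₁, h₁₁] using h₂₃
  obtain ⟨d, hd⟩ : ∃ d : Fˣ, A 1 1 = a * d :=
    ⟨Units.mk0 (A 1 1 / a) (div_ne_zero h₁₁ ha), (mul_div_cancel₀ _ ha).symm⟩
  have hd₂ : A 2 2 = a * d ^ 2 := mul_left_cancel₀ ha (by rw [hsq₁, hd]; ring)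
  have hd₃ : c = a * d ^ 3 := mul_right_cancel₀ h₁₁ (by rw [hsq₂, hd₂, hd]; ring)
  refine ⟨d, ?_⟩
  rw [coe_symCubeGL_dilation]
  ext i j
  fin_cases i <;> fin_cases j <;>
    simp [h₀, h₃, h₁₀, hd, h₁₂, h₁₃, h₂₀, h₂₁, hd₂, h₂₃, hd₃]

lemma exists_eq_projAct_dilation (hF : 5 ≤ #F) (hf : f ∈ Gq F)
    (hinfty : f (cubicPoint ![1, 0]) = cubicPoint ![1, 0])
    (hzero : f (cubicPoint ![0, 1]) = cubicPoint ![0, 1]) :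
    ∃ d : Fˣ, f = projAct F (symCubeGL (dilation d)) := by
  obtain ⟨A, rfl⟩ := hf.1
  obtain ⟨a, ha, h₀⟩ := exists_row_eq_of_fixes_infty hinfty
  obtain ⟨c, hc, h₃⟩ := exists_row_eq_of_fixes_zero hzero
  obtain ⟨d, hd⟩ := exists_eq_smul_symCubeGL_dilation hF hf ha hc h₀ h₃
  exact ⟨d, projAct_eq_of_eq_smul ha hd⟩

lemma exists_eq_projAct_inversion (hF : 5 ≤ #F) (hf : f ∈ Gq F)
    (hinfty : f (cubicPoint ![1, 0]) = cubicPoint ![0, 1])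
    (hzero : f (cubicPoint ![0, 1]) = cubicPoint ![1, 0]) :
    ∃ b : Fˣ, f = projAct F (symCubeGL (inversion b)) := by
  set J := projAct F (symCubeGL (inversion (1 : Fˣ))) with hJ
  have hJJ : J ∘ J = id := by
    rw [hJ, ← projAct_mul, ← map_mul, inversion_one_mul_inversion_one, map_one, projAct_one]
  obtain ⟨d, hd⟩ := exists_eq_projAct_dilation hF
    (comp_mem_Gq (projAct_symCubeGL_mem_Gq (inversion 1)) hf)
    (by simp [hinfty, projAct_inversion_cubicPoint])
    (by simp [hzero, projAct_inversion_cubicPoint])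
  refine ⟨d, ?_⟩
  calc f = J ∘ J ∘ f := by rw [← Function.comp_assoc, hJJ, Function.id_comp]
    _ = J ∘ projAct F (symCubeGL (dilation d)) := by rw [← hd]
    _ = projAct F (symCubeGL (inversion d)) := by
      rw [hJ, ← projAct_mul, ← map_mul, dilation_mul_inversion_one]

end FixingTwoPoints

section CoordinateChord

variable (F) in
/-- The real chord through `P(0)` and `P(∞)`. -/
def coordChord : Submodule F (Fin 4 → F) := cubicPoint ![0, 1] ⊔ cubicPoint ![1, 0]

lemma span_pair_eq_coordChord :
    span F ({![0, 0, 0, 1], ![1, 0, 0, 0]} : Set (Fin 4 → F)) = coordChord F := by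
  simp [coordChord, cubicPoint, veronese, span_insert]

lemma cubicPoint_infty_ne_cubicPoint_zero :
    cubicPoint ![1, 0] ≠ cubicPoint (![0, 1] : Fin 2 → F) :=
  fun h ↦ by simpa using cross_eq_of_cubicPoint_eq h

lemma isRealChord_coordChord : isRealChord F (coordChord F) :=
  isRealChord_iff.2 ⟨_, mem_twistedCubic_iff.2 ⟨![0, 1], by simp, rfl⟩,
    _, mem_twistedCubic_iff.2 ⟨![1, 0], by simp, rfl⟩,
    cubicPoint_infty_ne_cubicPoint_zero.symm, rfl⟩

variable {P ℓ : Submodule F (Fin 4 → F)}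
  {f : Submodule F (Fin 4 → F) → Submodule F (Fin 4 → F)}

lemma mem_lineOrbit_coordChord_of_isRealChord (hℓ : isRealChord F ℓ) :
    ℓ ∈ lineOrbit F (coordChord F) := by
  obtain ⟨P, hP, Q, hQ, hPQ, rfl⟩ := isRealChord_iff.1 hℓ
  obtain ⟨x, hx, rfl⟩ := mem_twistedCubic_iff.1 hP
  obtain ⟨y, hy, rfl⟩ := mem_twistedCubic_iff.1 hQ
  have hunit : IsUnit (Matrix.of ![y, x]) :=
    linearIndependent_rows_iff_isUnit.1 (linearIndependent_of_cubicPoint_ne hy hx hPQ.symm)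
  refine ⟨_, projAct_symCubeGL_mem_Gq hunit.unit, ?_⟩
  rw [coordChord, projAct_sup, projAct_symCubeGL_cubicPoint, projAct_symCubeGL_cubicPoint]
  simp

lemma setOf_isRealChord_eq_lineOrbit : {ℓ | isRealChord F ℓ} = lineOrbit F (coordChord F) := by
  refine Set.Subset.antisymm (fun ℓ ↦ mem_lineOrbit_coordChord_of_isRealChord) ?_
  rintro _ ⟨f, hf, rfl⟩
  exact isRealChord_apply hf isRealChord_coordChord

lemma apply_one_eq_zero_of_mem_coordChord {v : Fin 4 → F} (hv : v ∈ coordChord F) : v 1 = 0 := by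
  rw [← span_pair_eq_coordChord] at hv
  obtain ⟨a, b, rfl⟩ := mem_span_pair.1 hv
  simp

lemma eq_infty_or_eq_zero_of_le_coordChord (hP : P ∈ twistedCubic F) (hle : P ≤ coordChord F) :
    P = cubicPoint ![1, 0] ∨ P = cubicPoint ![0, 1] := by
  obtain ⟨x, hx, rfl⟩ := mem_twistedCubic_iff.1 hP
  have hmul : x 0 ^ 2 * x 1 = 0 :=
    apply_one_eq_zero_of_mem_coordChord (hle (mem_span_singleton_self (veronese x)))
  rcases eq_or_ne (x 1) 0 with hx₁ | hx₁
  · have hx₀ : x 0 ≠ 0 := fun hx₀ ↦ hx (by ext i; fin_cases i <;> assumption)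
    exact Or.inl (cubicPoint_eq_infty hx₀ hx₁)
  · have hx₀ : x 0 = 0 := by simpa [hx₁] using hmul
    exact Or.inr (by rw [cubicPoint_eq_affine hx₁, hx₀, zero_div])

lemma fixes_or_swaps_of_mem_lineStab (hf : f ∈ lineStab F (coordChord F)) :
    (f (cubicPoint ![1, 0]) = cubicPoint ![1, 0] ∧ f (cubicPoint ![0, 1]) = cubicPoint ![0, 1]) ∨
      (f (cubicPoint ![1, 0]) = cubicPoint ![0, 1] ∧
        f (cubicPoint ![0, 1]) = cubicPoint ![1, 0]) := by
  obtain ⟨hG, hstab⟩ := hf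
  have hsup : f (cubicPoint ![0, 1]) ⊔ f (cubicPoint ![1, 0]) = coordChord F := by
    rw [← map_sup_of_mem_Gq hG]
    exact hstab
  have hinfty := eq_infty_or_eq_zero_of_le_coordChord
    (apply_mem_twistedCubic hG (mem_twistedCubic_iff.2 ⟨![1, 0], by simp, rfl⟩))
    (le_sup_right.trans_eq hsup)
  have hzero := eq_infty_or_eq_zero_of_le_coordChord
    (apply_mem_twistedCubic hG (mem_twistedCubic_iff.2 ⟨![0, 1], by simp, rfl⟩))
    (le_sup_left.trans_eq hsup)
  have hne := (injective_of_mem_Gq hG).ne (cubicPoint_infty_ne_cubicPoint_zero (F := F))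
  grind

lemma projAct_dilation_coordChord (d : Fˣ) :
    projAct F (symCubeGL (dilation d)) (coordChord F) = coordChord F := by
  have hzero : cubicPoint ![0, (d : F) * 1] = cubicPoint ![0, 1] := by
    simpa using cubicPoint_eq_affine (x := ![0, (d : F) * 1]) (by simp)
  have hinfty : cubicPoint ![1, (d : F) * 0] = cubicPoint ![1, 0] := by rw [mul_zero]
  rw [coordChord, projAct_sup, projAct_dilation_cubicPoint, projAct_dilation_cubicPoint]
  exact congrArg₂ (· ⊔ ·) hzero hinfty

lemma projAct_inversion_coordChord (b : Fˣ) :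
    projAct F (symCubeGL (inversion b)) (coordChord F) = coordChord F := by
  have hzero : cubicPoint ![(b : F) * 1, 0] = cubicPoint ![1, 0] :=
    cubicPoint_eq_infty (by simp) rfl
  have hinfty : cubicPoint ![(b : F) * 0, 1] = cubicPoint ![0, 1] := by rw [mul_zero]
  rw [coordChord, projAct_sup, projAct_inversion_cubicPoint, projAct_inversion_cubicPoint, sup_comm]
  exact congrArg₂ (· ⊔ ·) hinfty hzero

/-- The projectivities stabilizing `coordChord F`: the diagonal ones, indexed by the left summand,
and the antidiagonal ones, indexed by the right summand. -/
def coordChordProjectivity :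
    Fˣ ⊕ Fˣ → Submodule F (Fin 4 → F) → Submodule F (Fin 4 → F) :=
  Sum.elim (fun d ↦ projAct F (symCubeGL (dilation d)))
    (fun b ↦ projAct F (symCubeGL (inversion b)))

lemma lineStab_coordChord (hF : 5 ≤ #F) :
    lineStab F (coordChord F) = Set.range coordChordProjectivity := by
  ext f
  constructor
  · intro hf
    rcases fixes_or_swaps_of_mem_lineStab hf with ⟨hinfty, hzero⟩ | ⟨hinfty, hzero⟩
    · obtain ⟨d, rfl⟩ := exists_eq_projAct_dilation hF hf.1 hinfty hzero
      exact ⟨Sum.inl d, rfl⟩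
    · obtain ⟨b, rfl⟩ := exists_eq_projAct_inversion hF hf.1 hinfty hzero
      exact ⟨Sum.inr b, rfl⟩
  · rintro ⟨d | b, rfl⟩
    · exact ⟨projAct_symCubeGL_mem_Gq _, projAct_dilation_coordChord d⟩
    · exact ⟨projAct_symCubeGL_mem_Gq _, projAct_inversion_coordChord b⟩

lemma range_coordChordProjectivity : Set.range (coordChordProjectivity (F := F)) =
    {f | ∃ A : GL (Fin 4) F,
      ((∃ d : F, d ≠ 0 ∧ (A : Matrix (Fin 4) (Fin 4) F) =
          !![1, 0, 0, 0; 0, d, 0, 0; 0, 0, d ^ 2, 0; 0, 0, 0, d ^ 3]) ∨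
        (∃ b : F, b ≠ 0 ∧ (A : Matrix (Fin 4) (Fin 4) F) =
          !![0, 0, 0, 1; 0, 0, b, 0; 0, b ^ 2, 0, 0; b ^ 3, 0, 0, 0])) ∧
      f = projAct F A} := by
  ext f
  constructor
  · rintro ⟨d | b, rfl⟩
    · exact ⟨_, Or.inl ⟨d, d.ne_zero, coe_symCubeGL_dilation d⟩, rfl⟩
    · exact ⟨_, Or.inr ⟨b, b.ne_zero, coe_symCubeGL_inversion b⟩, rfl⟩
  · rintro ⟨A, ⟨d, hd, hA⟩ | ⟨b, hb, hA⟩, rfl⟩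
    · exact ⟨Sum.inl (Units.mk0 d hd),
        congrArg (projAct F) (Units.ext ((coe_symCubeGL_dilation _).trans hA.symm))⟩
    · exact ⟨Sum.inr (Units.mk0 b hb),
        congrArg (projAct F) (Units.ext ((coe_symCubeGL_inversion _).trans hA.symm))⟩

lemma projAct_dilation_injective :
    Function.Injective fun d : Fˣ ↦ projAct F (symCubeGL (dilation d)) := fun d d' h ↦ by
  have hone := congrFun h (cubicPoint ![1, 1])
  simp only [projAct_dilation_cubicPoint] at hone
  exact Units.ext (by simpa using (cross_eq_of_cubicPoint_eq hone).symm)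

lemma projAct_inversion_injective :
    Function.Injective fun b : Fˣ ↦ projAct F (symCubeGL (inversion b)) := fun b b' h ↦ by
  have hone := congrFun h (cubicPoint ![1, 1])
  simp only [projAct_inversion_cubicPoint] at hone
  exact Units.ext (by simpa using cross_eq_of_cubicPoint_eq hone)

lemma projAct_dilation_ne_projAct_inversion (d b : Fˣ) :
    projAct F (symCubeGL (dilation d)) ≠ projAct F (symCubeGL (inversion b)) := fun h ↦ by
  have hinfty := congrFun h (cubicPoint ![1, 0])
  rw [projAct_dilation_cubicPoint, projAct_inversion_cubicPoint] at hinfty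
  simpa using cross_eq_of_cubicPoint_eq hinfty

lemma coordChordProjectivity_injective :
    Function.Injective (coordChordProjectivity (F := F)) :=
  projAct_dilation_injective.sumElim projAct_inversion_injective
    projAct_dilation_ne_projAct_inversion

lemma mk_lineStab_of_isRealChord (hF : 5 ≤ #F) (hℓ : isRealChord F ℓ) :
    #(lineStab F ℓ) = 2 * #Fˣ := by
  rw [mk_lineStab_eq_of_mem_lineOrbit (mem_lineOrbit_coordChord_of_isRealChord hℓ),
    lineStab_coordChord hF, Cardinal.mk_range_eq _ coordChordProjectivity_injective,
    Cardinal.mk_sum, Cardinal.lift_id, two_mul]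

lemma ncard_eq_of_mk_eq_two_mul_units [Fintype F] {α : Type*} {s : Set α}
    (hs : #s = 2 * Cardinal.lift #Fˣ) : s.ncard = 2 * (Fintype.card F - 1) := by
  rw [← Nat.card_coe_set_eq, Nat.card, hs, map_mul, Cardinal.toNat_ofNat, Cardinal.toNat_lift,
    ← Nat.card, Nat.card_units, Nat.card_eq_fintype_card]

end CoordinateChord

theorem stmt_4_general (F : Type) [Field F] (hF : 5 ≤ #F) :
    isRealChord F (span F {![0, 0, 0, 1], ![1, 0, 0, 0]}) ∧
    {ℓ : Submodule F (Fin 4 → F) | isRealChord F ℓ} =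
      lineOrbit F (span F {![0, 0, 0, 1], ![1, 0, 0, 0]}) ∧
    (∀ ℓ : Submodule F (Fin 4 → F), isRealChord F ℓ → #(lineStab F ℓ) = 2 * #Fˣ) ∧
    lineStab F (span F {![0, 0, 0, 1], ![1, 0, 0, 0]}) =
      {f | ∃ A : GL (Fin 4) F,
        ((∃ d : F, d ≠ 0 ∧ (A : Matrix (Fin 4) (Fin 4) F) =
            !![1, 0, 0, 0; 0, d, 0, 0; 0, 0, d ^ 2, 0; 0, 0, 0, d ^ 3]) ∨
          (∃ b : F, b ≠ 0 ∧ (A : Matrix (Fin 4) (Fin 4) F) =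
            !![0, 0, 0, 1; 0, 0, b, 0; 0, b ^ 2, 0, 0; b ^ 3, 0, 0, 0])) ∧
        f = projAct F A} := by
  rw [span_pair_eq_coordChord]
  exact ⟨isRealChord_coordChord, setOf_isRealChord_eq_lineOrbit,
    fun _ ↦ mk_lineStab_of_isRealChord hF,
    (lineStab_coordChord hF).trans range_coordChordProjectivity⟩

end

theorem stmt_4 (q : ℕ) (F : Type) [Field F] [Fintype F]
    (hcard : Fintype.card F = q) (hq : 5 ≤ q) :
    isRealChord F (Submodule.span F ({![0, 0, 0, 1], ![1, 0, 0, 0]} : Set (Fin 4 → F))) ∧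
    {ℓ : Submodule F (Fin 4 → F) | isRealChord F ℓ} = lineOrbit F (Submodule.span F ({![0, 0, 0, 1], ![1, 0, 0, 0]} : Set (Fin 4 → F))) ∧
    (∀ ℓ : Submodule F (Fin 4 → F), isRealChord F ℓ → (lineStab F ℓ).ncard = 2 * (q - 1)) ∧
    lineStab F (Submodule.span F ({![0, 0, 0, 1], ![1, 0, 0, 0]} : Set (Fin 4 → F))) =
      {f | ∃ A : GL (Fin 4) F,
        ((∃ d : F, d ≠ 0 ∧
            (↑A : Matrix (Fin 4) (Fin 4) F) =
              !![1, 0, 0, 0; 0, d, 0, 0; 0, 0, d ^ 2, 0; 0, 0, 0, d ^ 3]) ∨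
          (∃ b : F, b ≠ 0 ∧
            (↑A : Matrix (Fin 4) (Fin 4) F) =
              !![0, 0, 0, 1; 0, 0, b, 0; 0, b ^ 2, 0, 0; b ^ 3, 0, 0, 0])) ∧
        f = projAct F A} := by
  subst hcard
  obtain ⟨hchord, horbit, hmk, hstab⟩ :=
    stmt_4_general F (by rw [Cardinal.mk_fintype]; exact_mod_cast hq)
  exact ⟨hchord, horbit,
    fun ℓ hℓ ↦ ncard_eq_of_mk_eq_two_mul_units (by rw [hmk ℓ hℓ, Cardinal.lift_id]), hstab⟩
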